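/- Assume q is odd and let ε ∈ F_q satisfy ε^{r+1} = −1. Let T0 = {⟨(1,εγ,0,0)⟩ : γ ∈ F_q, γ^{r+1} = 1} and T1 = {⟨(0,0,1,εγ)⟩ : γ ∈ F_q, γ^{r+1} = 1}. Then all of these spanning vectors are isotropic, so T0 and T1 are sets of vertices of U(4,q) with |T0| = |T1| = r+1; every vertex of T0 is adjacent to every vertex of T1 and no two distinct vertices within T0 (or within T1) are adjacent; every vertex outside T0 ∪ T1 has at most one neighbour in T0, at most one neighbour in T1, and has a neighbour in T0 if and only if it has a neighbour in T1. Consequently, the function equal to 1 on T0, to −1 on T1, and to 0 elsewhere is a (−(r+1))-eigenfunction of U(4,q) whose support has cardinality 2(r+1). -/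

import Mathlib

/-!
Write `N(a) = a^(r+1)` for the norm `F_q → F_r`. Both `T₀` and `T₁` have the shape
`polarPart F r i j = {⟨e_i + t e_j⟩ : N(t) = -1}`, with `{i, j} = {0, 1}` and `{2, 3}`. Everything
follows from `H(u, e_i + t e_j) = u_i + u_j t^r` (`hermitianForm_pairVec`), using that `a ↦ a^r`
is an additive involution of `F_q`.

* Each part has `r + 1` elements because the elements of norm `-1` form a coset of the subgroup of
  order `r + 1` of the cyclic group `F_q^×` (`ncard_norm_eq_neg_one`).
* Distinct vertices of one part are not adjacent, as `1 + s t^r = 1 - s / t`; vertices of different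
  parts are adjacent because the supports of their spanning vectors are disjoint.
* For a vertex `⟨u⟩` outside both parts, `(u_0, u_1)` and `(u_2, u_3)` are nonzero
  (`mem_polarPart_of_support`). The equation `u_i + u_j t^r = 0` then has at most one solution
  `t` (`ncard_adj_polarPart_le_one`), and it has a solution of norm `-1` iff `N(u_i) + N(u_j) = 0`
  (`exists_adj_polarPart_iff`; here `r` odd is used). As `⟨u⟩` is isotropic, the four norms sum to
  zero, so this condition holds for `{0, 1}` iff it holds for `{2, 3}`.

The eigenfunction property is then a statement about arbitrary finite graphs,
`eigenfunction_of_biclique`.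
-/

open Module

/-- The Hermitian form `H(u,v) = ∑ᵢ uᵢ vᵢ^r` on `F^4`. -/
def hermitianForm {F : Type*} [Field F] (r : ℕ) (u v : Fin 4 → F) : F :=
  ∑ i, u i * (v i) ^ r

/-- The unitary polar graph `U(4,q)`: vertices are the one-dimensional subspaces of `F^4`
consisting of isotropic vectors, two distinct vertices being adjacent iff the Hermitian form
vanishes between them (for `q = r²`, `H(x,y) = 0 ↔ H(y,x) = 0`, so symmetrizing is
harmless). -/
def unitaryPolarGraph (F : Type*) [Field F] (r : ℕ) :
    SimpleGraph {W : Submodule F (Fin 4 → F) //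
      finrank F W = 1 ∧ ∀ x ∈ W, hermitianForm r x x = 0} :=
  SimpleGraph.fromRel (fun W₁ W₂ => ∀ x ∈ W₁.1, ∀ y ∈ W₂.1, hermitianForm r x y = 0)

instance {F M : Type*} [Field F] [AddCommGroup M] [Module F M] [Finite M] :
    Finite (Submodule F M) :=
  Finite.of_injective _ SetLike.coe_injective

/-- The vertices of `U(4,q)`: totally isotropic lines through the origin of `F^4`. -/
abbrev PolarVertex (F : Type*) [Field F] (r : ℕ) :=
  {W : Submodule F (Fin 4 → F) // finrank F W = 1 ∧ ∀ x ∈ W, hermitianForm r x x = 0}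

/-- The vector `e_i + t e_j` of `F^4` (meant for `i ≠ j`). -/
def pairVec {F : Type*} [Field F] (i j : Fin 4) (t : F) : Fin 4 → F :=
  Pi.single i 1 + Pi.single j t

/-- The vertices `⟨e_i + t e_j⟩` with `t` of norm `t^(r+1) = -1`. The set `T₀` is
`polarPart F r 0 1` and `T₁` is `polarPart F r 2 3`. -/
def polarPart (F : Type*) [Field F] (r : ℕ) (i j : Fin 4) : Set (PolarVertex F r) :=
  {W | ∃ t : F, t ^ (r + 1) = -1 ∧ W.1 = Submodule.span F {pairVec i j t}}

/-! ### The Frobenius map and the norm -/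

section Arithmetic

variable {F : Type*} [Field F] [Fintype F] {r : ℕ}

lemma add_pow_frob (hr : IsPrimePow r) (hq : Fintype.card F = r ^ 2) (a b : F) :
    (a + b) ^ r = a ^ r + b ^ r := by
  obtain ⟨p, hp, n, hpr, hcard⟩ := FiniteField.card' F
  obtain ⟨ℓ, k, hp', hk, rfl⟩ := hr
  have hdvd : ℓ ∣ p ^ (n : ℕ) := by
    rw [← hcard, hq, ← pow_mul]
    exact dvd_pow_self _ (by omega)
  have : ℓ = p := (Nat.prime_dvd_prime_iff_eq hp'.nat_prime hpr).1
    (hp'.nat_prime.dvd_of_dvd_pow hdvd)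
  subst this
  have : Fact ℓ.Prime := ⟨hpr⟩
  exact add_pow_char_pow a b ℓ k

lemma frob_frob (hq : Fintype.card F = r ^ 2) (a : F) : (a ^ r) ^ r = a := by
  rw [← pow_mul, ← sq, ← hq, FiniteField.pow_card]

/-- The norm `F_q → F_r` has exactly `r + 1` elements above `-1`: they form a coset of the
subgroup of order `r + 1` in the cyclic group `F_q^×`. -/
lemma ncard_norm_eq_neg_one (hr : IsPrimePow r) (hq : Fintype.card F = r ^ 2)
    {ε : F} (hε : ε ^ (r + 1) = -1) : {t : F | t ^ (r + 1) = -1}.ncard = r + 1 := by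
  have hr1 : 1 < r := hr.one_lt
  have hε0 : ε ≠ 0 := by
    rintro rfl
    simp at hε
  obtain ⟨g, hg⟩ := IsCyclic.exists_ofOrder_eq_natCard (α := Fˣ)
  have hcard : Nat.card Fˣ = (r - 1) * (r + 1) := by
    classical
    rw [Nat.card_eq_fintype_card, Fintype.card_units, hq]
    obtain ⟨s, rfl⟩ : ∃ s, r = s + 1 := ⟨r - 1, by omega⟩
    simp only [Nat.add_sub_cancel]
    rw [Nat.sub_eq_iff_eq_add (by nlinarith)]
    ring
  have hprim : IsPrimitiveRoot (((g ^ (r - 1) : Fˣ)) : F) (r + 1) := by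
    rw [IsPrimitiveRoot.coe_units_iff]
    refine (IsPrimitiveRoot.orderOf g).pow (orderOf_pos g) ?_
    rw [hg, hcard]
  have himg : {t : F | t ^ (r + 1) = -1} =
      (fun γ => ε * γ) '' (Polynomial.nthRootsFinset (r + 1) (1 : F) : Set F) := by
    ext t
    simp only [Set.mem_ofPred_eq, Set.mem_image, Finset.mem_coe,
      Polynomial.mem_nthRootsFinset (Nat.succ_pos r)]
    constructor
    · intro ht
      exact ⟨t / ε, by rw [div_pow, ht, hε]; norm_num, by field_simp⟩
    · rintro ⟨γ, hγ, rfl⟩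
      rw [mul_pow, hε, hγ, mul_one]
  rw [himg, Set.ncard_image_of_injective _ (mul_right_injective₀ hε0), Set.ncard_coe_finset,
    hprim.card_nthRootsFinset]

end Arithmetic

/-! ### The Hermitian form and adjacency -/

section Form

variable {F : Type*} [Field F] {r : ℕ}

lemma hermitianForm_smul_smul (a b : F) (u v : Fin 4 → F) :
    hermitianForm r (a • u) (b • v) = a * b ^ r * hermitianForm r u v := by
  simp only [hermitianForm, Fin.sum_univ_four, Pi.smul_apply, smul_eq_mul, mul_pow]
  ring

/-- The form is `r`-sesquisymmetric: `H(v,u) = H(u,v)^r`. -/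
lemma hermitianForm_swap (hadd : ∀ a b : F, (a + b) ^ r = a ^ r + b ^ r)
    (hfrob : ∀ a : F, (a ^ r) ^ r = a) (u v : Fin 4 → F) :
    hermitianForm r v u = hermitianForm r u v ^ r := by
  simp only [hermitianForm, Fin.sum_univ_four, hadd, mul_pow, hfrob]
  ring

lemma hermitianForm_pairVec (hr0 : r ≠ 0) {i j : Fin 4} (hij : i ≠ j) (u : Fin 4 → F) (t : F) :
    hermitianForm r u (pairVec i j t) = u i + u j * t ^ r := by
  have h (k : Fin 4) : u k * (pairVec i j t k) ^ r =
      (if k = i then u k else 0) + (if k = j then u k * t ^ r else 0) := by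
    by_cases hi : k = i
    · subst hi
      simp [pairVec, hij]
    · by_cases hj : k = j
      · subst hj
        simp [pairVec, hi]
      · simp [pairVec, hi, hj, hr0]
  simp only [hermitianForm, h, Finset.sum_add_distrib, Finset.sum_ite_eq', Finset.mem_univ,
    if_true]

lemma pairVec_apply_left {i j : Fin 4} (hij : i ≠ j) (t : F) : pairVec i j t i = 1 := by
  simp [pairVec, hij]

lemma pairVec_apply_right {i j : Fin 4} (hij : i ≠ j) (t : F) : pairVec i j t j = t := by
  simp [pairVec, hij.symm]

lemma pairVec_apply_of_ne {i j k : Fin 4} (hi : k ≠ i) (hj : k ≠ j) (t : F) :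
    pairVec i j t k = 0 := by
  simp [pairVec, hi, hj]

lemma pairVec_isotropic (hr0 : r ≠ 0) {i j : Fin 4} (hij : i ≠ j) {t : F}
    (ht : t ^ (r + 1) = -1) : hermitianForm r (pairVec i j t) (pairVec i j t) = 0 := by
  rw [hermitianForm_pairVec hr0 hij, pairVec_apply_left hij, pairVec_apply_right hij,
    ← pow_succ', ht, add_neg_cancel]

lemma span_pairVec_injective {i j : Fin 4} (hij : i ≠ j) {s t : F}
    (h : Submodule.span F {pairVec i j s} = Submodule.span F {pairVec i j t}) : s = t := by
  have hs : pairVec i j s ∈ Submodule.span F {pairVec i j t} :=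
    h ▸ Submodule.mem_span_singleton_self _
  obtain ⟨c, hc⟩ := Submodule.mem_span_singleton.1 hs
  have h1 := congrFun hc i
  have h2 := congrFun hc j
  simp only [Pi.smul_apply, smul_eq_mul, pairVec_apply_left hij, pairVec_apply_right hij,
    mul_one] at h1 h2
  rw [← h2, h1, one_mul]

lemma PolarVertex.exists_span (W : PolarVertex F r) :
    ∃ u : Fin 4 → F, u ≠ 0 ∧ W.1 = Submodule.span F {u} ∧ hermitianForm r u u = 0 := by
  obtain ⟨v, hv, hspan⟩ := finrank_eq_one_iff'.1 W.2.1
  refine ⟨v, by simpa using hv, le_antisymm (fun x hx => ?_) ?_, W.2.2 _ v.2⟩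
  · obtain ⟨c, hc⟩ := hspan ⟨x, hx⟩
    exact Submodule.mem_span_singleton.2 ⟨c, congrArg Subtype.val hc⟩
  · exact (Submodule.span_singleton_le_iff_mem _ _).2 v.2

/-- Adjacency may be tested on spanning vectors, in either order. -/
lemma adj_iff (hr0 : r ≠ 0) (hadd : ∀ a b : F, (a + b) ^ r = a ^ r + b ^ r)
    (hfrob : ∀ a : F, (a ^ r) ^ r = a) {W V : PolarVertex F r} {u v : Fin 4 → F}
    (hW : W.1 = Submodule.span F {u}) (hV : V.1 = Submodule.span F {v}) :
    (unitaryPolarGraph F r).Adj W V ↔ W ≠ V ∧ hermitianForm r u v = 0 := by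
  have huW : u ∈ W.1 := hW ▸ Submodule.mem_span_singleton_self _
  have hvV : v ∈ V.1 := hV ▸ Submodule.mem_span_singleton_self _
  rw [unitaryPolarGraph, SimpleGraph.fromRel_adj]
  refine and_congr_right fun _ => ⟨?_, fun h => Or.inl fun x hx y hy => ?_⟩
  · rintro (h | h)
    · exact h u huW v hvV
    · rw [hermitianForm_swap hadd hfrob v u, h v hvV u huW, zero_pow hr0]
  · rw [hW] at hx
    rw [hV] at hy
    obtain ⟨a, rfl⟩ := Submodule.mem_span_singleton.1 hx
    obtain ⟨b, rfl⟩ := Submodule.mem_span_singleton.1 hy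
    rw [hermitianForm_smul_smul, h, mul_zero]

end Form

/-! ### The sets `polarPart` -/

section Part

variable {F : Type*} [Field F] {r : ℕ} {i j : Fin 4}

/-- The vertex `⟨e_i + t e_j⟩` for `t` of norm `-1`. -/
def pairVertex (hr0 : r ≠ 0) (hij : i ≠ j) (t : F) (ht : t ^ (r + 1) = -1) :
    PolarVertex F r :=
  ⟨Submodule.span F {pairVec i j t},
    finrank_span_singleton fun h => one_ne_zero (α := F) <| by
      rw [← pairVec_apply_left hij t, h, Pi.zero_apply],
    fun x hx => by
      obtain ⟨c, rfl⟩ := Submodule.mem_span_singleton.1 hx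
      rw [hermitianForm_smul_smul, pairVec_isotropic hr0 hij ht, mul_zero]⟩

lemma ncard_polarPart [Fintype F] (hr : IsPrimePow r) (hq : Fintype.card F = r ^ 2)
    {ε : F} (hε : ε ^ (r + 1) = -1) (hij : i ≠ j) : (polarPart F r i j).ncard = r + 1 := by
  have hr0 : r ≠ 0 := hr.ne_zero
  let φ : {t : F | t ^ (r + 1) = -1} → PolarVertex F r := fun t =>
    pairVertex hr0 hij t.1 t.2
  have hφ : Function.Injective φ := fun s t h =>
    Subtype.ext (span_pairVec_injective hij (congrArg Subtype.val h))
  have hrange : polarPart F r i j = Set.range φ := by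
    ext W
    constructor
    · rintro ⟨t, ht, hW⟩
      exact ⟨⟨t, ht⟩, Subtype.ext hW.symm⟩
    · rintro ⟨t, rfl⟩
      exact ⟨t.1, t.2, rfl⟩
  rw [hrange, Set.ncard_range_of_injective hφ, Nat.card_coe_set_eq,
    ncard_norm_eq_neg_one hr hq hε]

/-- A vertex whose spanning vector is supported on the coordinates `i, j` lies in
`polarPart F r i j`. -/
lemma mem_polarPart_of_support (hij : i ≠ j) {W : PolarVertex F r} {u : Fin 4 → F}
    (hW : W.1 = Submodule.span F {u}) (hu : u ≠ 0)
    (hiso : u i ^ (r + 1) + u j ^ (r + 1) = 0)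
    (hsupp : ∀ k, k ≠ i → k ≠ j → u k = 0) : W ∈ polarPart F r i j := by
  have hi : u i ≠ 0 := by
    intro hi
    rw [hi, zero_pow (Nat.succ_ne_zero r), zero_add] at hiso
    have hj : u j = 0 := eq_zero_of_pow_eq_zero hiso
    refine hu (funext fun k => ?_)
    by_cases hki : k = i
    · rw [hki, hi, Pi.zero_apply]
    · by_cases hkj : k = j
      · rw [hkj, hj, Pi.zero_apply]
      · exact hsupp k hki hkj
  refine ⟨u j / u i, ?_, ?_⟩
  · rw [div_pow, div_eq_iff (pow_ne_zero _ hi)]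
    linear_combination hiso
  · have hvec : u = u i • pairVec i j (u j / u i) := by
      funext k
      rw [Pi.smul_apply, smul_eq_mul]
      by_cases hki : k = i
      · rw [hki, pairVec_apply_left hij, mul_one]
      · by_cases hkj : k = j
        · rw [hkj, pairVec_apply_right hij, mul_div_cancel₀ _ hi]
        · rw [pairVec_apply_of_ne hki hkj, hsupp k hki hkj, mul_zero]
    rw [hW]
    conv_lhs => rw [hvec]
    exact Submodule.span_singleton_smul_eq (isUnit_iff_ne_zero.2 hi) _

/-- For `t` of norm `-1`, `H(e_i + s e_j, e_i + t e_j) = 1 + s t^r = 1 - s / t` vanishes only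
for `s = t`. -/
lemma not_adj_polarPart (hr0 : r ≠ 0) (hadd : ∀ a b : F, (a + b) ^ r = a ^ r + b ^ r)
    (hfrob : ∀ a : F, (a ^ r) ^ r = a) (hij : i ≠ j) {x y : PolarVertex F r}
    (hx : x ∈ polarPart F r i j)
    (hy : y ∈ polarPart F r i j) : ¬(unitaryPolarGraph F r).Adj x y := by
  obtain ⟨s, hs, hxs⟩ := hx
  obtain ⟨t, ht, hyt⟩ := hy
  rw [adj_iff hr0 hadd hfrob hxs hyt, hermitianForm_pairVec hr0 hij, pairVec_apply_left hij,
    pairVec_apply_right hij]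
  rintro ⟨hne, h⟩
  apply hne
  have hst : s = t := by
    rw [pow_succ'] at ht
    linear_combination s * ht - t * h
  exact Subtype.ext (by rw [hxs, hyt, hst])

lemma adj_polarPart (hr0 : r ≠ 0) (hadd : ∀ a b : F, (a + b) ^ r = a ^ r + b ^ r)
    (hfrob : ∀ a : F, (a ^ r) ^ r = a) {k l : Fin 4} (hij : i ≠ j) (hkl : k ≠ l)
    (hik : i ≠ k) (hil : i ≠ l) (hjk : j ≠ k) (hjl : j ≠ l) {x y : PolarVertex F r}
    (hx : x ∈ polarPart F r i j) (hy : y ∈ polarPart F r k l) :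
    (unitaryPolarGraph F r).Adj x y := by
  obtain ⟨s, hs, hxs⟩ := hx
  obtain ⟨t, ht, hyt⟩ := hy
  rw [adj_iff hr0 hadd hfrob hxs hyt, hermitianForm_pairVec hr0 hkl,
    pairVec_apply_of_ne hik.symm hjk.symm, pairVec_apply_of_ne hil.symm hjl.symm]
  refine ⟨?_, by ring⟩
  rintro rfl
  have hmem : pairVec i j s ∈ Submodule.span F {pairVec k l t} := by
    rw [← hyt, hxs]
    exact Submodule.mem_span_singleton_self _
  obtain ⟨c, hc⟩ := Submodule.mem_span_singleton.1 hmem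
  have h1 := congrFun hc i
  rw [Pi.smul_apply, pairVec_apply_of_ne hik hil, pairVec_apply_left hij, smul_zero] at h1
  exact zero_ne_one h1

/-- A vertex `⟨u⟩` outside `polarPart F r i j` with `(u_i, u_j) ≠ 0` has a neighbour in this
set exactly when `u_i` and `u_j` have opposite norms. -/
lemma exists_adj_polarPart_iff (hr0 : r ≠ 0) (hadd : ∀ a b : F, (a + b) ^ r = a ^ r + b ^ r)
    (hfrob : ∀ a : F, (a ^ r) ^ r = a) (hrodd : Odd r) (hij : i ≠ j)
    {W : PolarVertex F r} {u : Fin 4 → F} (hW : W.1 = Submodule.span F {u})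
    (hout : W ∉ polarPart F r i j) (hu : u i ≠ 0 ∨ u j ≠ 0) :
    (∃ x ∈ polarPart F r i j, (unitaryPolarGraph F r).Adj W x) ↔
      u i ^ (r + 1) + u j ^ (r + 1) = 0 := by
  have heven : Even (r + 1) := hrodd.add_one
  constructor
  · rintro ⟨x, ⟨t, ht, hx⟩, hadj⟩
    rw [adj_iff hr0 hadd hfrob hW hx, hermitianForm_pairVec hr0 hij] at hadj
    have hui : u i = -(u j * t ^ r) := by linear_combination hadj.2
    rw [hui, heven.neg_pow, mul_pow, ← pow_mul, mul_comm r, pow_mul, ht, hrodd.neg_one_pow]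
    ring
  · intro h
    have hj : u j ≠ 0 := by
      intro hj
      rw [hj, zero_pow (Nat.succ_ne_zero r), add_zero] at h
      exact hu.elim (fun hi => hi (eq_zero_of_pow_eq_zero h)) (fun hne => hne hj)
    -- The solution of `u_i + u_j t^r = 0`, the map `a ↦ a^r` being an involution.
    have ht : ((-u i / u j) ^ r) ^ (r + 1) = -1 := by
      rw [← pow_mul, mul_comm, pow_mul, div_pow, heven.neg_pow]
      have : u i ^ (r + 1) / u j ^ (r + 1) = -1 := by
        rw [div_eq_iff (pow_ne_zero _ hj)]
        linear_combination h
      rw [this, hrodd.neg_one_pow]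
    have hmem : pairVertex hr0 hij _ ht ∈ polarPart F r i j := ⟨_, ht, rfl⟩
    refine ⟨_, hmem, (adj_iff hr0 hadd hfrob hW rfl).2 ⟨fun hWx => hout (hWx ▸ hmem), ?_⟩⟩
    rw [hermitianForm_pairVec hr0 hij, hfrob, mul_div_cancel₀ _ hj, add_neg_cancel]

/-- If `(u_i, u_j) ≠ 0`, then `u_i + u_j t^r = 0` determines `t`. -/
lemma ncard_adj_polarPart_le_one [Finite F] (hr0 : r ≠ 0)
    (hadd : ∀ a b : F, (a + b) ^ r = a ^ r + b ^ r)
    (hfrob : ∀ a : F, (a ^ r) ^ r = a) (hij : i ≠ j)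
    {W : PolarVertex F r} {u : Fin 4 → F} (hW : W.1 = Submodule.span F {u})
    (hu : u i ≠ 0 ∨ u j ≠ 0) :
    {x ∈ polarPart F r i j | (unitaryPolarGraph F r).Adj W x}.ncard ≤ 1 := by
  refine Set.ncard_le_one_iff_subsingleton.2 ?_
  rintro x ⟨⟨s, hs, hx⟩, hxadj⟩ y ⟨⟨t, ht, hy⟩, hyadj⟩
  rw [adj_iff hr0 hadd hfrob hW hx, hermitianForm_pairVec hr0 hij] at hxadj
  rw [adj_iff hr0 hadd hfrob hW hy, hermitianForm_pairVec hr0 hij] at hyadj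
  have hj : u j ≠ 0 := by
    intro hj
    have hi := hxadj.2
    rw [hj, zero_mul, add_zero] at hi
    exact hu.elim (fun h => h hi) (fun h => h hj)
  have hst : s ^ r = t ^ r :=
    mul_left_cancel₀ hj (by linear_combination hxadj.2 - hyadj.2)
  have hst' : s = t := by rw [← hfrob s, hst, hfrob]
  exact Subtype.ext (by rw [hx, hy, hst'])

end Part

/-! ### Eigenfunctions from bipartite configurations -/

/-- Let `A`, `B` be cocliques of size `n > 0` that are completely joined to each other, such
that every vertex outside has at most one neighbour in each of them, and has one in `A` iff it
has one in `B`. Then `1_A - 1_B` is a `(-n)`-eigenfunction: the neighbour sum at a vertex is the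
number of its neighbours in `A` minus the number of those in `B`. -/
lemma eigenfunction_of_biclique {V : Type*} [Finite V] (G : SimpleGraph V) (A B : Set V) (n : ℕ)
    (hn : 0 < n) (hA : A.ncard = n) (hB : B.ncard = n)
    (hAB : ∀ x ∈ A, ∀ y ∈ B, G.Adj x y)
    (hAA : ∀ x ∈ A, ∀ y ∈ A, ¬G.Adj x y) (hBB : ∀ x ∈ B, ∀ y ∈ B, ¬G.Adj x y)
    (hout : ∀ u, u ∉ A ∪ B → {x ∈ A | G.Adj u x}.ncard ≤ 1 ∧ {x ∈ B | G.Adj u x}.ncard ≤ 1 ∧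
      ((∃ x ∈ A, G.Adj u x) ↔ (∃ x ∈ B, G.Adj u x)))
    (f : V → ℝ) (hfA : ∀ x ∈ A, f x = 1) (hfB : ∀ x ∈ B, f x = -1)
    (hf0 : ∀ x, x ∉ A ∪ B → f x = 0) :
    f ≠ 0 ∧ (∀ γ, (-(n : ℝ)) * f γ = ∑ᶠ δ ∈ G.neighborSet γ, f δ) ∧
      {γ | f γ ≠ 0}.ncard = 2 * n := by
  classical
  have := Fintype.ofFinite V
  have hdisj : Disjoint A B := Set.disjoint_left.2 fun x hxA hxB => (hAB x hxA x hxB).ne rfl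
  have hf (x : V) : f x = (if x ∈ A then 1 else 0) - (if x ∈ B then 1 else 0) := by
    by_cases hxA : x ∈ A
    · simp [hxA, Set.disjoint_left.1 hdisj hxA, hfA x hxA]
    · by_cases hxB : x ∈ B
      · simp [hxA, hxB, hfB x hxB]
      · simp [hxA, hxB, hf0 x (by simp [hxA, hxB])]
  have hsum (γ : V) : ∑ᶠ δ ∈ G.neighborSet γ, f δ =
      ({x ∈ A | G.Adj γ x}.ncard : ℝ) - ({x ∈ B | G.Adj γ x}.ncard : ℝ) := by
    rw [finsum_mem_eq_finite_toFinset_sum _ (Set.toFinite _), Finset.sum_congr rfl fun x _ => hf x,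
      Finset.sum_sub_distrib, Finset.sum_boole, Finset.sum_boole]
    congr 2
    · rw [← Set.ncard_coe_finset]
      congr 1
      ext x
      simp [and_comm]
    · rw [← Set.ncard_coe_finset]
      congr 1
      ext x
      simp [and_comm]
  refine ⟨?_, fun γ => ?_, ?_⟩
  · obtain ⟨x, hx⟩ := Set.nonempty_of_ncard_ne_zero (hA ▸ hn.ne' : A.ncard ≠ 0)
    intro h
    have := hfA x hx
    simp [h] at this
  · rw [hsum]
    by_cases hγA : γ ∈ A
    · have h1 : {x ∈ A | G.Adj γ x} = ∅ := Set.eq_empty_of_forall_notMem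
        fun x hx => hAA γ hγA x hx.1 hx.2
      have h2 : {x ∈ B | G.Adj γ x} = B := Set.sep_eq_self_iff_mem_true.2 fun x hx => hAB γ hγA x hx
      rw [h1, h2, hB, hfA γ hγA, Set.ncard_empty]
      simp
    · by_cases hγB : γ ∈ B
      · have h1 : {x ∈ B | G.Adj γ x} = ∅ := Set.eq_empty_of_forall_notMem
          fun x hx => hBB γ hγB x hx.1 hx.2
        have h2 : {x ∈ A | G.Adj γ x} = A :=
          Set.sep_eq_self_iff_mem_true.2 fun x hx => (hAB x hx γ hγB).symm
        rw [h1, h2, hA, hfB γ hγB, Set.ncard_empty]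
        simp
      · have hγ : γ ∉ A ∪ B := by simp [hγA, hγB]
        obtain ⟨hle1, hle2, hiff⟩ := hout γ hγ
        have hpos : 0 < {x ∈ A | G.Adj γ x}.ncard ↔ 0 < {x ∈ B | G.Adj γ x}.ncard := by
          rw [Set.ncard_pos, Set.ncard_pos]
          exact hiff
        have heq : {x ∈ A | G.Adj γ x}.ncard = {x ∈ B | G.Adj γ x}.ncard := by omega
        rw [heq, hf0 γ hγ, mul_zero, sub_self]
  · have hsupp : {γ | f γ ≠ 0} = A ∪ B := by
      ext x
      refine ⟨fun hx => by_contra fun h => hx (hf0 x h), ?_⟩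
      rintro (hx | hx)
      · simp [hfA x hx]
      · simp [hfB x hx]
    rw [hsupp, Set.ncard_union_eq hdisj, hA, hB, two_mul]

/-! ### The sets `T₀` and `T₁` -/

lemma vec_eq_pairVec_zero_one {F : Type*} [Field F] (t : F) :
    (![1, t, 0, 0] : Fin 4 → F) = pairVec 0 1 t := by
  funext k
  fin_cases k <;> simp [pairVec]

lemma vec_eq_pairVec_two_three {F : Type*} [Field F] (t : F) :
    (![0, 0, 1, t] : Fin 4 → F) = pairVec 2 3 t := by
  funext k
  fin_cases k <;> simp [pairVec]

/-- As `γ` runs through the elements of norm `1`, `ε γ` runs through those of norm `-1`. -/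
lemma setOf_eq_polarPart {F : Type*} [Field F] {r : ℕ} {ε : F} (hε : ε ^ (r + 1) = -1)
    (i j : Fin 4) :
    {W : PolarVertex F r | ∃ γ : F, γ ^ (r + 1) = 1 ∧
      W.1 = Submodule.span F {pairVec i j (ε * γ)}} = polarPart F r i j := by
  have hε0 : ε ≠ 0 := by
    rintro rfl
    simp at hε
  ext W
  constructor
  · rintro ⟨γ, hγ, hW⟩
    exact ⟨ε * γ, by rw [mul_pow, hε, hγ, mul_one], hW⟩
  · rintro ⟨t, ht, hW⟩
    exact ⟨t / ε, by rw [div_pow, ht, hε]; norm_num, by rw [mul_div_cancel₀ _ hε0, hW]⟩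

/-- `q` odd: the explicit pair `T₀, T₁` of sets of vertices of `U(4,q)`
induces a complete bipartite subgraph with parts of size `r+1`, every outside vertex has at
most one neighbour in each part, with a neighbour in one part iff in the other, and the
associated `±1` function is a `-(r+1)`-eigenfunction with support of cardinality `2(r+1)`. -/
theorem stmt19 (F : Type*) [Field F] [Fintype F] (r q : ℕ)
    (hr : IsPrimePow r) (hq : Fintype.card F = q) (hq2 : q = r ^ 2)
    (hodd : Odd q) (ε : F) (hε : ε ^ (r + 1) = -1)
    (T₀ T₁ : Set {W : Submodule F (Fin 4 → F) //
        finrank F W = 1 ∧ ∀ x ∈ W, hermitianForm r x x = 0})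
    (hT₀ : T₀ = {W | ∃ γ : F, γ ^ (r + 1) = 1 ∧
        W.1 = Submodule.span F {(![1, ε * γ, 0, 0] : Fin 4 → F)}})
    (hT₁ : T₁ = {W | ∃ γ : F, γ ^ (r + 1) = 1 ∧
        W.1 = Submodule.span F {(![0, 0, 1, ε * γ] : Fin 4 → F)}}) :
    (∀ γ : F, γ ^ (r + 1) = 1 →
        hermitianForm r (![1, ε * γ, 0, 0] : Fin 4 → F) ![1, ε * γ, 0, 0] = 0 ∧
        hermitianForm r (![0, 0, 1, ε * γ] : Fin 4 → F) ![0, 0, 1, ε * γ] = 0) ∧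
    T₀.ncard = r + 1 ∧ T₁.ncard = r + 1 ∧
    (∀ x ∈ T₀, ∀ y ∈ T₁, (unitaryPolarGraph F r).Adj x y) ∧
    (∀ x ∈ T₀, ∀ y ∈ T₀, ¬(unitaryPolarGraph F r).Adj x y) ∧
    (∀ x ∈ T₁, ∀ y ∈ T₁, ¬(unitaryPolarGraph F r).Adj x y) ∧
    (∀ u, u ∉ T₀ ∪ T₁ →
      {x ∈ T₀ | (unitaryPolarGraph F r).Adj u x}.ncard ≤ 1 ∧
      {x ∈ T₁ | (unitaryPolarGraph F r).Adj u x}.ncard ≤ 1 ∧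
      ((∃ x ∈ T₀, (unitaryPolarGraph F r).Adj u x) ↔
        (∃ x ∈ T₁, (unitaryPolarGraph F r).Adj u x))) ∧
    (∀ f : {W : Submodule F (Fin 4 → F) //
          finrank F W = 1 ∧ ∀ x ∈ W, hermitianForm r x x = 0} → ℝ,
      (∀ x ∈ T₀, f x = 1) → (∀ x ∈ T₁, f x = -1) → (∀ x, x ∉ T₀ ∪ T₁ → f x = 0) →
      f ≠ 0 ∧
      (∀ γ, (-((r : ℝ) + 1)) * f γ = ∑ᶠ δ ∈ (unitaryPolarGraph F r).neighborSet γ, f δ) ∧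
      {γ | f γ ≠ 0}.ncard = 2 * (r + 1)) := by
  have hcard : Fintype.card F = r ^ 2 := hq.trans hq2
  have hr0 : r ≠ 0 := hr.ne_zero
  have hadd : ∀ a b : F, (a + b) ^ r = a ^ r + b ^ r := add_pow_frob hr hcard
  have hfrob : ∀ a : F, (a ^ r) ^ r = a := frob_frob hcard
  have hrodd : Odd r := by
    rw [hq2] at hodd
    exact (Nat.odd_pow_iff two_ne_zero).1 hodd
  have h01 : (0 : Fin 4) ≠ 1 := by decide
  have h23 : (2 : Fin 4) ≠ 3 := by decide
  simp only [vec_eq_pairVec_zero_one, vec_eq_pairVec_two_three] at hT₀ hT₁ ⊢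
  rw [setOf_eq_polarPart hε] at hT₀ hT₁
  have hc₀ : T₀.ncard = r + 1 := hT₀ ▸ ncard_polarPart hr hcard hε h01
  have hc₁ : T₁.ncard = r + 1 := hT₁ ▸ ncard_polarPart hr hcard hε h23
  have hjoin : ∀ x ∈ T₀, ∀ y ∈ T₁, (unitaryPolarGraph F r).Adj x y := by
    rw [hT₀, hT₁]
    exact fun x hx y hy => adj_polarPart hr0 hadd hfrob h01 h23 (by decide) (by decide)
      (by decide) (by decide) hx hy
  have hco₀ : ∀ x ∈ T₀, ∀ y ∈ T₀, ¬(unitaryPolarGraph F r).Adj x y := by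
    rw [hT₀]
    exact fun x hx y hy => not_adj_polarPart hr0 hadd hfrob h01 hx hy
  have hco₁ : ∀ x ∈ T₁, ∀ y ∈ T₁, ¬(unitaryPolarGraph F r).Adj x y := by
    rw [hT₁]
    exact fun x hx y hy => not_adj_polarPart hr0 hadd hfrob h23 hx hy
  have hout : ∀ u, u ∉ T₀ ∪ T₁ →
      {x ∈ T₀ | (unitaryPolarGraph F r).Adj u x}.ncard ≤ 1 ∧
      {x ∈ T₁ | (unitaryPolarGraph F r).Adj u x}.ncard ≤ 1 ∧
      ((∃ x ∈ T₀, (unitaryPolarGraph F r).Adj u x) ↔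
        (∃ x ∈ T₁, (unitaryPolarGraph F r).Adj u x)) := by
    intro W hWout
    rw [Set.mem_union, not_or, hT₀, hT₁] at hWout
    obtain ⟨hW₀, hW₁⟩ := hWout
    obtain ⟨u, hu, hW, hiso⟩ := PolarVertex.exists_span W
    have hnorm : u 0 ^ (r + 1) + u 1 ^ (r + 1) + (u 2 ^ (r + 1) + u 3 ^ (r + 1)) = 0 := by
      rw [← hiso, hermitianForm, Fin.sum_univ_four]
      ring
    have hz : (0 : F) ^ (r + 1) = 0 := zero_pow (Nat.succ_ne_zero r)
    -- If one half of the coordinates vanished, the vertex would lie in the other part.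
    have hu₀ : u 0 ≠ 0 ∨ u 1 ≠ 0 := by
      by_contra! h
      refine hW₁ (mem_polarPart_of_support h23 hW hu ?_ ?_)
      · rw [h.1, h.2, hz] at hnorm
        linear_combination hnorm
      · intro k h2 h3
        fin_cases k <;> simp_all
    have hu₁ : u 2 ≠ 0 ∨ u 3 ≠ 0 := by
      by_contra! h
      refine hW₀ (mem_polarPart_of_support h01 hW hu ?_ ?_)
      · rw [h.1, h.2, hz] at hnorm
        linear_combination hnorm
      · intro k h0 h1
        fin_cases k <;> simp_all
    rw [hT₀, hT₁]
    refine ⟨ncard_adj_polarPart_le_one hr0 hadd hfrob h01 hW hu₀,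
      ncard_adj_polarPart_le_one hr0 hadd hfrob h23 hW hu₁, ?_⟩
    rw [exists_adj_polarPart_iff hr0 hadd hfrob hrodd h01 hW hW₀ hu₀,
      exists_adj_polarPart_iff hr0 hadd hfrob hrodd h23 hW hW₁ hu₁]
    constructor <;> intro h <;> linear_combination hnorm - h
  refine ⟨fun γ hγ => ?_, hc₀, hc₁, hjoin, hco₀, hco₁, hout, fun f hf₀ hf₁ hf => ?_⟩
  · have hnorm : (ε * γ) ^ (r + 1) = -1 := by rw [mul_pow, hε, hγ, mul_one]
    exact ⟨pairVec_isotropic hr0 h01 hnorm, pairVec_isotropic hr0 h23 hnorm⟩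
  · have h := eigenfunction_of_biclique (unitaryPolarGraph F r) T₀ T₁ (r + 1) (Nat.succ_pos r)
      hc₀ hc₁ hjoin hco₀ hco₁ hout f hf₀ hf₁ hf
    push_cast at h
    exact h
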